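/- Generalized law of total variance. Let Ω be a finite set, μ a probability mass function on Ω, X : Ω → ℝ^d, Y : Ω → β for a finite type β, and ψ : ℝ^d → ℝ differentiable. Write E[X] = Σ_{ω} μ(ω) X(ω), P(Y = y) = Σ_{ω : Y(ω) = y} μ(ω), and for y with P(Y = y) > 0, m_y = (Σ_{ω : Y(ω)=y} μ(ω) X(ω)) / P(Y = y). Then Σ_{ω} μ(ω) D_ψ(X(ω), E[X]) = Σ_{y : P(Y=y)>0} Σ_{ω : Y(ω)=y} μ(ω) D_ψ(X(ω), m_y) + Σ_{y : P(Y=y)>0} P(Y = y) D_ψ(m_y, E[X]). In words, the generalized variance of X equals the expected generalized conditional variance of X given Y plus the generalized variance of the conditional expectation E[X | Y]. -/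

import Mathlib

open scoped BigOperators

/-- Bregman divergence `D_ψ(p, q) = ψ(p) − ψ(q) − ⟨∇ψ(q), p − q⟩`. -/
noncomputable def breg {d : ℕ} (ψ : EuclideanSpace ℝ (Fin d) → ℝ)
    (p q : EuclideanSpace ℝ (Fin d)) : ℝ :=
  ψ p - ψ q - @inner ℝ _ _ (gradient ψ q) (p - q)

/-- The probability simplex Δ_d in ℝ^d. -/
def probSimplex (d : ℕ) : Set (EuclideanSpace ℝ (Fin d)) :=
  {p | (∀ j, 0 ≤ p j) ∧ ∑ j, p j = 1}

/-- The `y`-th standard basis vector of ℝ^d. -/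
noncomputable def basisVec {d : ℕ} (y : Fin d) : EuclideanSpace ℝ (Fin d) :=
  EuclideanSpace.single y 1

/-!
The three-point identity `D(p, q) = D(p, m) + D(m, q) + (φ m - φ q) (p - m)` splits a divergence at
an intermediate point `m`, up to a term linear in `p - m`. When `m` is the weighted mean of the
points `p`, that term averages to zero. The law of total variance is this statement on every fiber
of `Y`, summed over the fibers; fibers of mass zero contribute nothing, since nonnegative
weights with zero sum all vanish.
-/

/-- The Bregman divergence of `ψ` with the differential of `ψ` at `q` replaced by an arbitrary
linear functional `φ q`. Differentials give the usual divergence, and a selection of subgradients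
gives the divergence of a nonsmooth convex function. -/
def bregmanDivergence {R E : Type*} [CommRing R] [AddCommGroup E] [Module R E]
    (ψ : E → R) (φ : E → E →ₗ[R] R) (p q : E) : R :=
  ψ p - ψ q - φ q (p - q)

section CommRing

variable {R E Ω : Type*} [CommRing R] [AddCommGroup E] [Module R E]
  (ψ : E → R) (φ : E → E →ₗ[R] R)

theorem bregmanDivergence_eq_add_add (p m q : E) :
    bregmanDivergence ψ φ p q
      = bregmanDivergence ψ φ p m + bregmanDivergence ψ φ m q + (φ m - φ q) (p - m) := by
  simp only [bregmanDivergence, LinearMap.sub_apply, map_sub]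
  ring

theorem sum_mul_map_sub_eq_zero {s : Finset Ω} {μ : Ω → R} {X : Ω → E} {m : E}
    (hm : (∑ ω ∈ s, μ ω) • m = ∑ ω ∈ s, μ ω • X ω) (f : E →ₗ[R] R) :
    ∑ ω ∈ s, μ ω * f (X ω - m) = 0 := by
  have hcentered : ∑ ω ∈ s, μ ω • (X ω - m) = 0 := by
    simp only [smul_sub, Finset.sum_sub_distrib, ← Finset.sum_smul, hm, sub_self]
  simpa only [map_sum, map_smul, smul_eq_mul, map_zero] using congrArg f hcentered

theorem sum_mul_bregmanDivergence_eq_add {s : Finset Ω} {μ : Ω → R} {X : Ω → E} {m : E}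
    (hm : (∑ ω ∈ s, μ ω) • m = ∑ ω ∈ s, μ ω • X ω) (q : E) :
    ∑ ω ∈ s, μ ω * bregmanDivergence ψ φ (X ω) q
      = ∑ ω ∈ s, μ ω * bregmanDivergence ψ φ (X ω) m
        + (∑ ω ∈ s, μ ω) * bregmanDivergence ψ φ m q := by
  have hlinear := sum_mul_map_sub_eq_zero hm (φ m - φ q)
  calc ∑ ω ∈ s, μ ω * bregmanDivergence ψ φ (X ω) q
      = ∑ ω ∈ s, (μ ω * bregmanDivergence ψ φ (X ω) m + μ ω * bregmanDivergence ψ φ m q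
          + μ ω * (φ m - φ q) (X ω - m)) :=
        Finset.sum_congr rfl fun ω _ => by
          rw [bregmanDivergence_eq_add_add ψ φ (X ω) m q, mul_add, mul_add]
    _ = ∑ ω ∈ s, μ ω * bregmanDivergence ψ φ (X ω) m
          + (∑ ω ∈ s, μ ω) * bregmanDivergence ψ φ m q := by
        rw [Finset.sum_add_distrib, Finset.sum_add_distrib, hlinear, add_zero, Finset.sum_mul]

end CommRing

theorem sum_smul_eq_sum_fiberwise_pos {R M Ω β : Type*} [Semiring R] [PartialOrder R]
    [DecidableLT R] [IsOrderedAddMonoid R] [AddCommMonoid M] [Module R M] [DecidableEq β]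
    {s : Finset Ω} {t : Finset β} {Y : Ω → β} (hY : ∀ ω ∈ s, Y ω ∈ t)
    {μ : Ω → R} (hμ : ∀ ω ∈ s, 0 ≤ μ ω) (f : Ω → M) :
    ∑ ω ∈ s, μ ω • f ω
      = ∑ b ∈ t with 0 < ∑ ω ∈ s with Y ω = b, μ ω, ∑ ω ∈ s with Y ω = b, μ ω • f ω := by
  rw [← Finset.sum_fiberwise_of_maps_to hY]
  refine (Finset.sum_filter_of_ne fun b _ hne => ?_).symm
  obtain ⟨ω, hω, hω_ne⟩ := Finset.exists_ne_zero_of_sum_ne_zero hne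
  have hμ_fiber : ∀ ω' ∈ s.filter (Y · = b), 0 ≤ μ ω' :=
    fun ω' hω' => hμ ω' (Finset.mem_of_mem_filter ω' hω')
  have hμ_pos : 0 < μ ω := (hμ_fiber ω hω).lt_of_ne' (left_ne_zero_of_smul hω_ne)
  exact hμ_pos.trans_le (Finset.single_le_sum hμ_fiber hω)

theorem stmt16_general {𝕜 E Ω β : Type*} [Field 𝕜] [LinearOrder 𝕜] [IsStrictOrderedRing 𝕜]
    [AddCommGroup E] [Module 𝕜 E] [DecidableEq β] {s : Finset Ω} {t : Finset β}
    {Y : Ω → β} (hY : ∀ ω ∈ s, Y ω ∈ t) {μ : Ω → 𝕜} (hμ : ∀ ω ∈ s, 0 ≤ μ ω) {X : Ω → E}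
    {P : β → 𝕜} (hP : ∀ b, P b = ∑ ω ∈ s with Y ω = b, μ ω) {m : β → E}
    (hm : ∀ b ∈ t, 0 < P b → m b = (P b)⁻¹ • ∑ ω ∈ s with Y ω = b, μ ω • X ω)
    (ψ : E → 𝕜) (φ : E → E →ₗ[𝕜] 𝕜) (q : E) :
    ∑ ω ∈ s, μ ω * bregmanDivergence ψ φ (X ω) q
      = ∑ b ∈ t with 0 < P b, ∑ ω ∈ s with Y ω = b, μ ω * bregmanDivergence ψ φ (X ω) (m b)
        + ∑ b ∈ t with 0 < P b, P b * bregmanDivergence ψ φ (m b) q := by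
  obtain rfl := funext hP
  have hmean {b : β} (hb : b ∈ t) (hpos : 0 < ∑ ω ∈ s with Y ω = b, μ ω) :
      (∑ ω ∈ s with Y ω = b, μ ω) • m b = ∑ ω ∈ s with Y ω = b, μ ω • X ω := by
    rw [hm b hb hpos, smul_inv_smul₀ hpos.ne']
  calc ∑ ω ∈ s, μ ω * bregmanDivergence ψ φ (X ω) q
      = ∑ b ∈ t with 0 < ∑ ω ∈ s with Y ω = b, μ ω,
          ∑ ω ∈ s with Y ω = b, μ ω * bregmanDivergence ψ φ (X ω) q :=
        sum_smul_eq_sum_fiberwise_pos hY hμ fun ω => bregmanDivergence ψ φ (X ω) q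
    _ = ∑ b ∈ t with 0 < ∑ ω ∈ s with Y ω = b, μ ω,
          (∑ ω ∈ s with Y ω = b, μ ω * bregmanDivergence ψ φ (X ω) (m b)
            + (∑ ω ∈ s with Y ω = b, μ ω) * bregmanDivergence ψ φ (m b) q) := by
        refine Finset.sum_congr rfl fun b hb => ?_
        obtain ⟨hbt, hpos⟩ := Finset.mem_filter.mp hb
        exact sum_mul_bregmanDivergence_eq_add ψ φ (hmean hbt hpos) q
    _ = _ := Finset.sum_add_distrib

/-- Generalized law of total variance (Lemma `gen-law-total-var`) for a Bregman
divergence, for a random vector `X` and a random variable `Y` on a finite probability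
space: the generalized variance of `X` equals the expected generalized conditional
variance of `X` given `Y` plus the generalized variance of `E[X | Y]`. -/
theorem stmt16 {d : ℕ} {Ω β : Type*} [Fintype Ω] [Fintype β] [DecidableEq β]
    (μ : Ω → ℝ) (hμ0 : ∀ ω, 0 ≤ μ ω) (hμ1 : ∑ ω, μ ω = 1)
    (X : Ω → EuclideanSpace ℝ (Fin d)) (Y : Ω → β)
    (ψ : EuclideanSpace ℝ (Fin d) → ℝ) (hψ : Differentiable ℝ ψ)
    (EX : EuclideanSpace ℝ (Fin d)) (hEX : EX = ∑ ω, μ ω • X ω)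
    (P : β → ℝ) (hP : ∀ b, P b = ∑ ω ∈ Finset.univ.filter (fun ω => Y ω = b), μ ω)
    (m : β → EuclideanSpace ℝ (Fin d))
    (hm : ∀ b, 0 < P b →
        m b = (P b)⁻¹ • ∑ ω ∈ Finset.univ.filter (fun ω => Y ω = b), μ ω • X ω) :
    ∑ ω, μ ω * breg ψ (X ω) EX
      = (∑ b ∈ Finset.univ.filter (fun b => 0 < P b),
            ∑ ω ∈ Finset.univ.filter (fun ω => Y ω = b), μ ω * breg ψ (X ω) (m b))
        + ∑ b ∈ Finset.univ.filter (fun b => 0 < P b), P b * breg ψ (m b) EX := by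
  exact stmt16_general (fun ω _ => Finset.mem_univ (Y ω)) (fun ω _ => hμ0 ω) hP
    (fun b _ => hm b) ψ (fun x => innerₗ _ (gradient ψ x)) EX
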